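/- arXiv:1212.2243 — 2 statements merged into one kernel-verified Lean document; each statement's English description precedes it below -/
import Mathlib

section
/- Let 𝔽 be a field, let G(z) = G₀ + G₁z + ⋯ + G_δ z^δ be a k×n matrix over 𝔽[z] such that the stacked ((δ+1)k)×n matrix (G_δ; …; G₀) has rank k(δ+1), and let μ be the minimum Hamming distance of the linear block code spanned over 𝔽 by the rows of this stacked matrix. Let α(z) = α₀ + α₁z + ⋯ + α_l z^l with α_i ∈ 𝔽^k, α₀ ≠ 0 and α_l ≠ 0, and suppose that there is no index j with δ ≤ j ≤ l such that α_{j−δ} = α_{j−δ+1} = ⋯ = α_j = 0 (this condition is vacuous when l < δ). Then w(α(z)·G(z)) ≥ (l+δ+1)·μ. -/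
open Polynomial

/-- The weight of a vector of polynomials: the total number of nonzero coefficients. -/
noncomputable def polyWeight {F : Type*} [Field F] {n : ℕ} (c : Fin n → Polynomial F) : ℕ :=
  ∑ j, (c j).support.card

/-- The free distance of a submodule of `𝔽[z]ⁿ`: the minimal weight of a nonzero element. -/
noncomputable def freeDist {F : Type*} [Field F] {n : ℕ}
    (C : Submodule (Polynomial F) (Fin n → Polynomial F)) : ℕ :=
  sInf {d | ∃ c ∈ C, c ≠ 0 ∧ polyWeight c = d}

/-- The Hamming weight of a vector. -/
noncomputable def hammingWt {F : Type*} [Field F] {n : ℕ} (v : Fin n → F) : ℕ :=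
  Set.ncard {j | v j ≠ 0}

/-- The minimum distance of a linear block code. -/
noncomputable def minDist {F : Type*} [Field F] {n : ℕ} (C : Submodule F (Fin n → F)) : ℕ :=
  sInf {d | ∃ v ∈ C, v ≠ 0 ∧ hammingWt v = d}

/-- The `l`-th row distance of the convolutional code with generator matrix `G`. -/
noncomputable def rowDist {F : Type*} [Field F] {k n : ℕ}
    (G : Fin k → Fin n → Polynomial F) (l : ℕ) : ℕ :=
  sInf {d | ∃ α : Fin k → Polynomial F, α ≠ 0 ∧ (∀ i, (α i).natDegree ≤ l) ∧
    polyWeight (fun j => ∑ i, α i * G i j) = d}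

/-- The set of maximal (`k × k`) minors of a `k × n` polynomial matrix. -/
def maximalMinors {F : Type*} [Field F] {k n : ℕ} (G : Fin k → Fin n → Polynomial F) :
    Set (Polynomial F) :=
  {p | ∃ φ : Fin k ↪ Fin n, p = Matrix.det (Matrix.of fun i j => G i (φ j))}

/-- A generator matrix is basic when its maximal minors are coprime, i.e. generate the
unit ideal of `𝔽[z]`. -/
def IsBasic {F : Type*} [Field F] {k n : ℕ} (G : Fin k → Fin n → Polynomial F) : Prop :=
  Ideal.span (maximalMinors G) = ⊤

/-- The degree of the code: the highest degree of the maximal minors of a generator matrix. -/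
noncomputable def degCode {F : Type*} [Field F] {k n : ℕ}
    (G : Fin k → Fin n → Polynomial F) : ℕ :=
  sSup (Polynomial.natDegree '' maximalMinors G)

/-- The degree of the `i`-th row of a polynomial matrix. -/
noncomputable def rowDeg {F : Type*} [Field F] {k n : ℕ}
    (G : Fin k → Fin n → Polynomial F) (i : Fin k) : ℕ :=
  Finset.univ.sup fun j => (G i j).natDegree

/-- A generator matrix is reduced when the sum of its row degrees equals the maximal degree
of its maximal minors. -/
def IsReducedMatrix {F : Type*} [Field F] {k n : ℕ} (G : Fin k → Fin n → Polynomial F) : Prop :=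
  (∑ i, rowDeg G i) = degCode G

/-- A generator matrix is canonical when it is basic and reduced. -/
def IsCanonical {F : Type*} [Field F] {k n : ℕ} (G : Fin k → Fin n → Polynomial F) : Prop :=
  IsBasic G ∧ IsReducedMatrix G

/-- The coefficient vectors of `c` at distinct exponents contribute separately to its weight. -/
theorem sum_hammingWt_coeff_le_polyWeight {F : Type*} [Field F] {n : ℕ}
    (c : Fin n → Polynomial F) (s : Finset ℕ) :
    ∑ t ∈ s, hammingWt (fun j => (c j).coeff t) ≤ polyWeight c := by
  classical
  have hwt (t : ℕ) : hammingWt (fun j => (c j).coeff t) =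
      ∑ j, if (c j).coeff t ≠ 0 then 1 else 0 := by
    rw [hammingWt, ← Finset.card_filter, ← Set.ncard_coe_finset]
    simp
  simp_rw [hwt]
  rw [Finset.sum_comm]
  refine Finset.sum_le_sum fun j _ => ?_
  rw [← Finset.card_filter]
  refine Finset.card_le_card fun t ht => ?_
  simpa using (Finset.mem_filter.mp ht).2

theorem minDist_le_hammingWt {F : Type*} [Field F] {n : ℕ} {C : Submodule F (Fin n → F)}
    {v : Fin n → F} (hv : v ∈ C) (hne : v ≠ 0) : minDist C ≤ hammingWt v :=
  Nat.sInf_le ⟨v, hv, hne, rfl⟩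

/-- The coefficients of `α(z) G(z)` as combinations of the rows of the stacked matrix. -/
theorem coeff_sum_mul_eq {F : Type*} [Field F] {k n δ l : ℕ} (Gc : ℕ → Fin k → Fin n → F)
    (α : ℕ → Fin k → F) (hα : ∀ d, l < d → α d = 0) (t : ℕ) :
    (fun col : Fin n => (∑ i : Fin k,
      (∑ d ∈ Finset.range (l + 1), Polynomial.C (α d i) * Polynomial.X ^ d) *
        (∑ d ∈ Finset.range (δ + 1), Polynomial.C (Gc d i col) * Polynomial.X ^ d)).coeff t) =
    ∑ p : Fin (δ + 1) × Fin k,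
      (if (p.1 : ℕ) ≤ t then α (t - p.1) p.2 else 0) • Gc (p.1 : ℕ) p.2 := by
  have hcoeff (i : Fin k) (m : ℕ) :
      (∑ d ∈ Finset.range (l + 1), Polynomial.C (α d i) * Polynomial.X ^ d).coeff m = α m i := by
    simp only [Polynomial.finsetSum_coeff, Polynomial.coeff_C_mul_X_pow]
    rw [Finset.sum_ite_eq, ite_eq_left_iff]
    intro hm
    rw [hα m (by simpa using hm), Pi.zero_apply]
  ext col
  rw [Fintype.sum_prod_type_right, Finset.sum_apply, Polynomial.finsetSum_coeff]
  refine Finset.sum_congr rfl fun i _ => ?_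
  rw [Finset.mul_sum, Polynomial.finsetSum_coeff, Finset.sum_apply,
    Finset.sum_range]
  refine Finset.sum_congr rfl fun p _ => ?_
  rw [← mul_assoc, Polynomial.coeff_mul_X_pow', Pi.smul_apply, smul_eq_mul, ite_mul, zero_mul,
    Polynomial.coeff_mul_C, hcoeff]

/-- Every window of `δ + 1` consecutive coefficients of `α` that meets `[0, l]` is nonzero. -/
theorem exists_coeff_ne_zero_of_no_gap {M : Type*} [Zero M] {δ l : ℕ} {α : ℕ → M}
    (h0 : α 0 ≠ 0) (hl : α l ≠ 0)
    (hgap : ¬ ∃ j, δ ≤ j ∧ j ≤ l ∧ ∀ m, j - δ ≤ m → m ≤ j → α m = 0)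
    {t : ℕ} (ht : t < l + δ + 1) : ∃ p ≤ δ, p ≤ t ∧ α (t - p) ≠ 0 := by
  rcases le_total t δ with htδ | hδt
  · exact ⟨t, htδ, le_rfl, by simpa using h0⟩
  rcases le_total l t with hlt | htl
  · exact ⟨t - l, by omega, by omega, by rwa [Nat.sub_sub_self hlt]⟩
  · push Not at hgap
    obtain ⟨m, hm, hmt, hne⟩ := hgap t hδt htl
    exact ⟨t - m, by omega, by omega, by rwa [Nat.sub_sub_self hmt]⟩

/-- If the stacked matrix `(G_δ; …; G₀)` has rank `k(δ+1)`, `μ` is the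
minimum distance of the block code spanned by its rows, and `α(z) = α₀ + ⋯ + α_l z^l` has
`α₀ ≠ 0`, `α_l ≠ 0` and no gap of `δ+1` consecutive vanishing coefficients `α_{j-δ},…,α_j`
with `δ ≤ j ≤ l`, then `w(α(z)·G(z)) ≥ (l+δ+1)·μ`. -/
theorem weight_lower_bound {F : Type*} [Field F] {k n δ l : ℕ}
    (Gc : ℕ → Fin k → Fin n → F) (hGc : ∀ d, δ < d → Gc d = 0)
    (hrank : Matrix.rank
      (Matrix.of fun (p : Fin (δ + 1) × Fin k) (j : Fin n) => Gc (p.1 : ℕ) p.2 j) = k * (δ + 1))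
    (μ : ℕ)
    (hμ : μ = minDist (Submodule.span F
      (Set.range fun p : Fin (δ + 1) × Fin k => fun j => Gc (p.1 : ℕ) p.2 j)))
    (α : ℕ → Fin k → F) (hα : ∀ d, l < d → α d = 0)
    (h0 : α 0 ≠ 0) (hl : α l ≠ 0)
    (hgap : ¬ ∃ j, δ ≤ j ∧ j ≤ l ∧ ∀ m, j - δ ≤ m → m ≤ j → α m = 0) :
    (l + δ + 1) * μ ≤ polyWeight (fun col : Fin n =>
      ∑ i : Fin k, (∑ d ∈ Finset.range (l + 1), Polynomial.C (α d i) * Polynomial.X ^ d) *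
        (∑ d ∈ Finset.range (δ + 1), Polynomial.C (Gc d i col) * Polynomial.X ^ d)) := by
  have hli : LinearIndependent F
      (fun p : Fin (δ + 1) × Fin k => Gc (p.1 : ℕ) p.2) := by
    rw [linearIndependent_iff_card_eq_finrank_span, Set.finrank]
    rw [Matrix.rank_eq_finrank_span_row] at hrank
    simp only [Fintype.card_prod, Fintype.card_fin]
    rw [mul_comm]
    exact hrank.symm
  refine le_trans ?_ (sum_hammingWt_coeff_le_polyWeight _ (Finset.range (l + δ + 1)))
  refine le_of_eq_of_le (by simp) (Finset.card_nsmul_le_sum (Finset.range (l + δ + 1)) _ μ ?_)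
  intro t ht
  rw [coeff_sum_mul_eq Gc α hα t, hμ]
  refine minDist_le_hammingWt (Submodule.sum_mem _ fun p _ =>
    Submodule.smul_mem _ _ (Submodule.subset_span ⟨p, rfl⟩)) fun hzero => ?_
  obtain ⟨p, hpδ, hpt, hne⟩ :=
    exists_coeff_ne_zero_of_no_gap h0 hl hgap (Finset.mem_range.mp ht)
  refine hne (funext fun i => ?_)
  simpa [hpt] using Fintype.linearIndependent_iff.mp hli _ hzero (⟨p, by omega⟩, i)
end

section
/- Let 𝔽 be a finite field, let a₁,…,a_n be pairwise distinct nonzero elements of 𝔽, let b ∈ 𝔽, and let 0 ≤ δ < n. For λ ∈ 𝔽^{δ+1}, λ ≠ 0, let C_λ be the 1-dimensional convolutional code generated by (s_λ(a₁z+b), …, s_λ(a_n z+b)), where s_λ(t) = Σ_{i=0}^{δ} λ_i t^i. Then {λ ≠ 0 : d_free(C_λ) = n(δ+1)} = {λ ≠ 0 : s_λ^{(j)}(b) ≠ 0 for all 0 ≤ j ≤ δ}, and this set is non-empty. -/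
open Polynomial

/-- A nonzero polynomial with coefficients supported in `[u, u + d]` vanishes at no more than `d`
of `n` distinct nonzero points. -/
lemma sub_le_card_eval_ne_zero {F : Type*} [Field F] {n : ℕ} {a : Fin n → F}
    (ha : ∀ i, a i ≠ 0) (hinj : Function.Injective a) {Q : F[X]} (hQ : Q ≠ 0) {u d : ℕ}
    (hlo : ∀ i < u, Q.coeff i = 0) (hhi : Q.natDegree ≤ u + d) :
    n - d ≤ Nat.card {j // Q.eval (a j) ≠ 0} := by
  classical
  obtain ⟨R, rfl⟩ := X_pow_dvd_iff.2 hlo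
  have hR : R ≠ 0 := right_ne_zero_of_mul hQ
  have hdeg : R.natDegree ≤ d := by
    rw [natDegree_X_pow_mul _ hR] at hhi
    omega
  have hroots : (Finset.univ.filter fun j => R.eval (a j) = 0).card ≤ d := by
    calc _ = ((Finset.univ.filter fun j => R.eval (a j) = 0).image a).card :=
          (Finset.card_image_of_injective _ hinj).symm
      _ ≤ R.roots.toFinset.card := by
          refine Finset.card_le_card fun x hx => ?_
          obtain ⟨j, hj, rfl⟩ := Finset.mem_image.1 hx
          simpa [hR] using hj
      _ ≤ R.roots.card := Multiset.toFinset_card_le _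
      _ ≤ d := (card_roots' R).trans hdeg
  have hsum := Finset.card_filter_add_card_filter_not (s := (Finset.univ : Finset (Fin n)))
    (fun j => R.eval (a j) = 0)
  rw [Finset.card_univ, Fintype.card_fin] at hsum
  have hcard : Nat.card {j // (X ^ u * R).eval (a j) ≠ 0} =
      (Finset.univ.filter fun j => ¬ R.eval (a j) = 0).card := by
    rw [Nat.card_eq_fintype_card, Fintype.card_subtype]
    congr 1
    ext j
    simp [ha j]
  omega

/-- The polynomial whose value at `x` is the coefficient of `z ^ k` in `p(z) q(x z)`. -/
noncomputable def coeffPoly {F : Type*} [Field F] (p q : F[X]) (k : ℕ) : F[X] :=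
  ∑ i ∈ Finset.range (k + 1), monomial i (q.coeff i * p.coeff (k - i))

lemma coeff_coeffPoly {F : Type*} [Field F] (p q : F[X]) (k i : ℕ) :
    (coeffPoly p q k).coeff i = if i ≤ k then q.coeff i * p.coeff (k - i) else 0 := by
  simp [coeffPoly, coeff_monomial]

lemma eval_coeffPoly {F : Type*} [Field F] (p q : F[X]) (k : ℕ) (x : F) :
    (coeffPoly p q k).eval x = (p * q.comp (C x * X)).coeff k := by
  rw [mul_comm p, coeff_mul, Finset.Nat.sum_antidiagonal_eq_sum_range_succ_mk, coeffPoly,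
    eval_finsetSum]
  refine Finset.sum_congr rfl fun i _ => ?_
  rw [eval_monomial, comp_C_mul_X_coeff]
  ring

lemma sum_range_card_le_polyWeight {F : Type*} [Field F] {n : ℕ} (c : Fin n → F[X]) (N : ℕ) :
    ∑ k ∈ Finset.range N, Nat.card {j // (c j).coeff k ≠ 0} ≤ polyWeight c := by
  classical
  simp_rw [polyWeight, Nat.card_eq_fintype_card, Fintype.card_subtype, Finset.card_filter]
  rw [Finset.sum_comm]
  refine Finset.sum_le_sum fun j _ => ?_
  rw [← Finset.card_filter]
  exact Finset.card_le_card fun k hk => mem_support_iff.2 (Finset.mem_filter.1 hk).2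

lemma sum_min_le_sum_sub {n δ : ℕ} (hδ : δ < n) (L : ℕ) :
    ∑ k ∈ Finset.range (δ + 1), min k L ≤ ∑ m ∈ Finset.range L, (n - m) := by
  have hmin (k : ℕ) : min k L = ∑ m ∈ Finset.range L, if m < k then 1 else 0 := by
    rw [← Finset.card_filter, show (Finset.range L).filter (· < k) = Finset.range (min k L) by
      ext; simp; omega, Finset.card_range]
  simp_rw [hmin]
  rw [Finset.sum_comm]
  refine Finset.sum_le_sum fun m hm => ?_
  rw [← Finset.card_filter]
  calc _ ≤ (Finset.Ioc m δ).card := Finset.card_le_card fun k hk => by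
        simp at hk ⊢; omega
    _ ≤ n - m := by rw [Nat.card_Ioc]; omega

/-- If `q` has degree `δ < n` and full support, every nonzero multiple of `(q(a_j z))_j` has
weight at least `n (δ + 1)`. -/
lemma le_polyWeight_mul_comp {F : Type*} [Field F] {n δ : ℕ} (hδ : δ < n) {a : Fin n → F}
    (ha : ∀ i, a i ≠ 0) (hinj : Function.Injective a) {q : F[X]} (hq : q.natDegree ≤ δ)
    (hq0 : ∀ i ≤ δ, q.coeff i ≠ 0) {p : F[X]} (hp : p ≠ 0) :
    n * (δ + 1) ≤ polyWeight fun j => p * q.comp (C (a j) * X) := by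
  set t := p.natTrailingDegree with ht
  obtain ⟨l, hl⟩ : ∃ l, p.natDegree = t + l :=
    Nat.exists_eq_add_of_le (natTrailingDegree_le_natDegree p)
  have hpt : p.coeff t ≠ 0 := by simpa [ht] using hp
  have hpl : p.coeff (t + l) ≠ 0 := by rw [← hl]; simpa using hp
  have hplo {i : ℕ} (hi : i < t) : p.coeff i = 0 := coeff_eq_zero_of_lt_natTrailingDegree hi
  have hphi {i : ℕ} (hi : t + l < i) : p.coeff i = 0 :=
    coeff_eq_zero_of_natDegree_lt (hl ▸ hi)
  have hqhi {i : ℕ} (hi : δ < i) : q.coeff i = 0 := coeff_eq_zero_of_natDegree_lt (hq.trans_lt hi)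
  set W : ℕ → ℕ := fun k => Nat.card {j // (coeffPoly p q k).eval (a j) ≠ 0}
  have hne {k i : ℕ} (hik : i ≤ k) (hi : i ≤ δ) (hpi : p.coeff (k - i) ≠ 0) :
      coeffPoly p q k ≠ 0 := fun h => by
    have := coeff_coeffPoly p q k i
    rw [h, if_pos hik] at this
    exact mul_ne_zero (hq0 i hi) hpi this.symm
  have hlow (k : ℕ) (hk : k ≤ δ) : n - min k l ≤ W (t + k) := by
    refine sub_le_card_eval_ne_zero ha hinj (u := k - l)
      (hne (i := k) (by omega) hk (by simpa using hpt)) (fun i hi => ?_) ?_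
    · rw [coeff_coeffPoly, hphi (by omega)]; simp
    · refine natDegree_le_iff_coeff_eq_zero.2 fun i hi => ?_
      rw [coeff_coeffPoly]
      split_ifs with hik
      · rw [hplo (by omega), mul_zero]
      · rfl
  have hhigh (m : ℕ) (hm : m < l) (hmδ : m ≤ δ) : n - m ≤ W (t + (δ + 1 + (l - 1 - m))) := by
    refine sub_le_card_eval_ne_zero ha hinj (u := δ - m)
      (hne (i := δ - m) (by omega) (by omega) ?_) (fun i hi => ?_) ?_
    · rwa [show t + (δ + 1 + (l - 1 - m)) - (δ - m) = t + l by omega]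
    · rw [coeff_coeffPoly, hphi (by omega)]; simp
    · refine natDegree_le_iff_coeff_eq_zero.2 fun i hi => ?_
      rw [coeff_coeffPoly, hqhi (by omega)]; simp
  set L := min l (δ + 1) with hL
  have hmain := sum_range_card_le_polyWeight (fun j => p * q.comp (C (a j) * X)) (t + (δ + 1 + l))
  simp_rw [← eval_coeffPoly] at hmain
  change ∑ k ∈ Finset.range (t + (δ + 1 + l)), W k ≤ _ at hmain
  rw [Finset.sum_range_add, Finset.sum_range_add,
    ← Finset.sum_range_reflect (fun m => W (t + (δ + 1 + m)))] at hmain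
  have hfirst : n * (δ + 1) ≤ ∑ k ∈ Finset.range (δ + 1), W (t + k) +
      ∑ k ∈ Finset.range (δ + 1), min k L := by
    rw [← Finset.sum_add_distrib, mul_comm, ← smul_eq_mul]
    nth_rw 1 [← Finset.card_range (δ + 1)]
    refine Finset.card_nsmul_le_sum _ _ _ fun k hk => ?_
    have hk' := Finset.mem_range.1 hk
    have := hlow k (by omega)
    omega
  have hsecond : ∑ m ∈ Finset.range L, (n - m) ≤
      ∑ m ∈ Finset.range l, W (t + (δ + 1 + (l - 1 - m))) := by
    calc _ ≤ ∑ m ∈ Finset.range L, W (t + (δ + 1 + (l - 1 - m))) :=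
          Finset.sum_le_sum fun m hm => by
            have := Finset.mem_range.1 hm
            exact hhigh m (by omega) (by omega)
      _ ≤ _ := Finset.sum_le_sum_of_subset (Finset.range_subset_range.2 (by omega))
  have := sum_min_le_sum_sub hδ L
  omega

lemma polyWeight_comp_C_mul_X {F : Type*} [Field F] {n : ℕ} {a : Fin n → F}
    (ha : ∀ i, a i ≠ 0) (q : F[X]) :
    (polyWeight fun j => q.comp (C (a j) * X)) = n * q.support.card := by
  have hsupp (j : Fin n) : (q.comp (C (a j) * X)).support = q.support := by
    ext i
    simp [comp_C_mul_X_coeff, ha j]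
  simp [polyWeight, hsupp]

/-- The code generated by `(q(a_j z))_j` attains the generalized Singleton bound exactly when all
coefficients of `q` up to degree `δ` are nonzero. -/
lemma freeDist_span_comp_eq_iff {F : Type*} [Field F] {n δ : ℕ} (hδ : δ < n) {a : Fin n → F}
    (ha : ∀ i, a i ≠ 0) (hinj : Function.Injective a) {q : F[X]} (hq : q.natDegree ≤ δ)
    (hq_ne : q ≠ 0) :
    freeDist (Submodule.span F[X] {fun j : Fin n => q.comp (C (a j) * X)}) = n * (δ + 1) ↔
      ∀ i : Fin (δ + 1), q.coeff i ≠ 0 := by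
  have hn : 0 < n := by omega
  have hweight := polyWeight_comp_C_mul_X ha q
  have hsupp : q.support ⊆ Finset.range (δ + 1) := fun i hi =>
    Finset.mem_range.2 (Nat.lt_succ_of_le ((le_natDegree_of_mem_supp i hi).trans hq))
  set g : Fin n → F[X] := fun j => q.comp (C (a j) * X)
  have hg_ne : g ≠ 0 := fun h => by
    have h0 : n * q.support.card = 0 := by
      rw [← hweight, h]; simp [polyWeight]
    simp [hn.ne', hq_ne] at h0
  have hle : freeDist (Submodule.span F[X] {g}) ≤ n * q.support.card :=
    Nat.sInf_le ⟨g, Submodule.mem_span_singleton_self g, hg_ne, hweight⟩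
  constructor
  · intro h i hi
    have hcard : δ + 1 ≤ q.support.card := by
      rw [h] at hle
      exact Nat.le_of_mul_le_mul_left hle hn
    have heq := Finset.eq_of_subset_of_card_le hsupp (by simpa using hcard)
    have hmem : (i : ℕ) ∈ q.support := heq ▸ Finset.mem_range.2 i.2
    exact mem_support_iff.1 hmem hi
  · intro h
    refine le_antisymm (hle.trans (Nat.mul_le_mul_left n ?_)) ?_
    · simpa using Finset.card_le_card hsupp
    · refine le_csInf ⟨_, g, Submodule.mem_span_singleton_self g, hg_ne, rfl⟩ ?_
      rintro d ⟨c, hc, hc0, rfl⟩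
      obtain ⟨p, rfl⟩ := Submodule.mem_span_singleton.1 hc
      exact le_polyWeight_mul_comp hδ ha hinj hq (fun i hi => h ⟨i, Nat.lt_succ_of_le hi⟩)
        (left_ne_zero_of_smul hc0)

lemma coeff_sum_C_mul_X_pow {F : Type*} [Field F] {δ : ℕ} (lam : Fin (δ + 1) → F)
    (i : Fin (δ + 1)) : (∑ k : Fin (δ + 1), C (lam k) * X ^ (k : ℕ)).coeff i = lam i := by
  simp [coeff_X_pow, Fin.val_inj]

lemma natDegree_sum_C_mul_X_pow_le {F : Type*} [Field F] {δ : ℕ} (lam : Fin (δ + 1) → F) :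
    (∑ k : Fin (δ + 1), C (lam k) * X ^ (k : ℕ)).natDegree ≤ δ :=
  natDegree_sum_le_of_forall_le _ _ fun k _ =>
    (natDegree_C_mul_X_pow_le _ _).trans (Nat.le_of_lt_succ k.2)

lemma comp_C_mul_X_add_C {F : Type*} [Field F] (s : F[X]) (x b : F) :
    s.comp (C x * X + C b) = (taylor b s).comp (C x * X) := by
  simp [taylor_apply, comp_assoc]

/-- In the family of 1-dimensional convolutional Goppa codes
`C_λ = ⟨(s_λ(a₁z+b), …, s_λ(a_nz+b))⟩`, the set of nonzero parameters `λ` giving an MDS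
code coincides with the set of nonzero `λ` with all Hasse derivatives `s_λ^{(j)}(b) ≠ 0`
for `0 ≤ j ≤ δ`, and this set is non-empty. -/
theorem goppa_MDS_locus_eq_and_nonempty {F : Type*} [Field F] [Fintype F] {n δ : ℕ}
    (hδ : δ < n)
    (a : Fin n → F) (ha : ∀ i, a i ≠ 0) (hinj : Function.Injective a) (b : F) :
    {lam : Fin (δ + 1) → F | lam ≠ 0 ∧
        freeDist (Submodule.span (Polynomial F)
          {fun j : Fin n =>
            (∑ i : Fin (δ + 1), Polynomial.C (lam i) * Polynomial.X ^ (i : ℕ)).comp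
              (Polynomial.C (a j) * Polynomial.X + Polynomial.C b)}) = n * (δ + 1)} =
      {lam : Fin (δ + 1) → F | lam ≠ 0 ∧ ∀ j : Fin (δ + 1),
        (Polynomial.hasseDeriv (j : ℕ)
          (∑ i : Fin (δ + 1), Polynomial.C (lam i) * Polynomial.X ^ (i : ℕ))).eval b ≠ 0} ∧
    {lam : Fin (δ + 1) → F | lam ≠ 0 ∧
        freeDist (Submodule.span (Polynomial F)
          {fun j : Fin n =>
            (∑ i : Fin (δ + 1), Polynomial.C (lam i) * Polynomial.X ^ (i : ℕ)).comp
              (Polynomial.C (a j) * Polynomial.X + Polynomial.C b)}) = n * (δ + 1)}.Nonempty := by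
  have hlocus (lam : Fin (δ + 1) → F) (hlam : lam ≠ 0) :
      freeDist (Submodule.span F[X] {fun j : Fin n =>
        (∑ i : Fin (δ + 1), C (lam i) * X ^ (i : ℕ)).comp (C (a j) * X + C b)}) = n * (δ + 1) ↔
      ∀ j : Fin (δ + 1), (hasseDeriv (j : ℕ)
        (∑ i : Fin (δ + 1), C (lam i) * X ^ (i : ℕ))).eval b ≠ 0 := by
    have hdeg := natDegree_sum_C_mul_X_pow_le lam
    have hs : (∑ i : Fin (δ + 1), C (lam i) * X ^ (i : ℕ)) ≠ 0 := fun h =>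
      hlam (funext fun i => by rw [← coeff_sum_C_mul_X_pow lam i, h]; simp)
    simp_rw [comp_C_mul_X_add_C, ← taylor_coeff]
    exact freeDist_span_comp_eq_iff hδ ha hinj (by rwa [natDegree_taylor])
      fun h => hs (taylor_injective b (by rw [h, map_zero]))
  have heq := Set.ext fun lam : Fin (δ + 1) → F => and_congr_right (hlocus lam)
  refine ⟨heq, ?_⟩
  set P : F[X] := ∑ k : Fin (δ + 1), C ((fun _ => 1 : Fin (δ + 1) → F) k) * X ^ (k : ℕ) with hP
  have hPdeg : (taylor (-b) P).natDegree < δ + 1 := by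
    rw [natDegree_taylor]
    exact Nat.lt_succ_of_le (natDegree_sum_C_mul_X_pow_le _)
  set lam : Fin (δ + 1) → F := fun i => (taylor (-b) P).coeff i
  have hs : (∑ i : Fin (δ + 1), C (lam i) * X ^ (i : ℕ)) = taylor (-b) P := by
    rw [(taylor (-b) P).as_sum_range_C_mul_X_pow' hPdeg, Finset.sum_range]
  have hderiv : ∀ j : Fin (δ + 1), (hasseDeriv (j : ℕ)
      (∑ i : Fin (δ + 1), C (lam i) * X ^ (i : ℕ))).eval b ≠ 0 := fun j => by
    rw [hs, ← taylor_coeff, taylor_taylor, add_neg_cancel, taylor_zero, hP, coeff_sum_C_mul_X_pow]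
    exact one_ne_zero
  have hlam_ne : lam ≠ 0 := fun h => hderiv 0 (by simp [h])
  exact ⟨lam, hlam_ne, (hlocus lam hlam_ne).2 hderiv⟩
end
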